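/- Continuous-time limit of the normalized single-token uniform reverse probability (equation (eq:limit-cscore)). Fix σ ∈ (0,1) and suppose the noise-schedule assumption holds at σ. Then for every x ∈ X, every coordinate h ∈ {1,…,H}, and every token a ≠ x^h, with t = t_σ(T), one has lim_{T→∞} q^h_{t−1|t}(a | x) / (β^{(T)}_t / K) = q_σ(x^{h→a}) / q_σ(x). -/

import Mathlib

open scoped Classical
open Filter

/-- Uniform-corrupted marginal `q_σ(x)`. -/
noncomputable def qUnif (K H : ℕ) (p : (Fin H → Fin K) → ℝ) (σ : ℝ)
    (x : Fin H → Fin K) : ℝ :=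
  ∑ x0 : Fin H → Fin K, p x0 *
    ∏ i : Fin H, ((1 - σ) * (if x i = x0 i then (1 : ℝ) else 0) + σ / K)

/-- Cumulative noise level `σ^{(T)}_t = 1 − ∏_{s=1}^t (1 − β^{(T)}_s)`. -/
noncomputable def cumNoise (β : ℕ → ℕ → ℝ) (T t : ℕ) : ℝ :=
  1 - ∏ s ∈ Finset.Icc 1 t, (1 - β T s)

/-- One-step uniform forward kernel `q_{t|t−1}(y'|y)` with per-step rate `b`. -/
noncomputable def stepUnif (K H : ℕ) (b : ℝ) (y' y : Fin H → Fin K) : ℝ :=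
  ∏ i : Fin H, ((1 - b) * (if y' i = y i then (1 : ℝ) else 0) + b / K)

/-- Exact single-token reverse probability
`q^h_{t−1|t}(a|x) = Σ_{y : y^h = a} q_{t−1}(y) q_{t|t−1}(x|y) / q_t(x)`. -/
noncomputable def revUnif (K H : ℕ) (p : (Fin H → Fin K) → ℝ) (β : ℕ → ℕ → ℝ)
    (T t : ℕ) (h : Fin H) (a : Fin K) (x : Fin H → Fin K) : ℝ :=
  (∑ y ∈ Finset.univ.filter (fun y : Fin H → Fin K => y h = a),
      qUnif K H p (cumNoise β T (t - 1)) y * stepUnif K H (β T t) x y)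
    / qUnif K H p (cumNoise β T t) x

/-! If `a ≠ x h`, every `y` with `y h = a` must change at coordinate `h` to reach `x`, so `stepUnif`
has the factor `β / K` and dividing by it leaves the kernel on the other coordinates. As `β → 0`
this kernel tends to the identity, which selects `y = update x h a`, while the noise level at time
`t - 1` has the same limit `σ` as at time `t` because
`1 - cumNoise β T (t - 1) = (1 - cumNoise β T t) / (1 - β T t)`. -/

/-- The uniform forward kernel restricted to the coordinates in `s`. For `s = univ` it is
`stepUnif`, and also the corruption kernel inside `qUnif`. -/
noncomputable def stepUnifOn {K H : ℕ} (s : Finset (Fin H)) (b : ℝ) (y' y : Fin H → Fin K) : ℝ :=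
  ∏ i ∈ s, ((1 - b) * (if y' i = y i then (1 : ℝ) else 0) + b / K)

/-- For `a ≠ x h`, the numerator of `revUnif` divided by `b / K`, as a function of the noise level
`σ` before the step and of the step rate `b`. The factor `b / K` of coordinate `h` is left out of
the product, so that the value at `b = 0` is meaningful. -/
noncomputable def jumpWeight {K H : ℕ} (p : (Fin H → Fin K) → ℝ) (h : Fin H) (a : Fin K)
    (x : Fin H → Fin K) (σ b : ℝ) : ℝ :=
  ∑ y : Fin H → Fin K with y h = a, qUnif K H p σ y * stepUnifOn (Finset.univ.erase h) b x y

section Kernel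

variable {K H : ℕ}

lemma qUnif_eq_sum_stepUnifOn (p : (Fin H → Fin K) → ℝ) (σ : ℝ) (x : Fin H → Fin K) :
    qUnif K H p σ x = ∑ x0, p x0 * stepUnifOn Finset.univ σ x x0 :=
  rfl

lemma continuous_stepUnifOn (s : Finset (Fin H)) (x y : Fin H → Fin K) :
    Continuous fun b => stepUnifOn s b x y := by
  unfold stepUnifOn
  fun_prop

lemma stepUnifOn_pos {b : ℝ} (hb : b ∈ Set.Ioc 0 1) (s : Finset (Fin H)) (x y : Fin H → Fin K) :
    0 < stepUnifOn s b x y := by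
  refine Finset.prod_pos fun i _ => add_pos_of_nonneg_of_pos ?_ ?_
  · exact mul_nonneg (sub_nonneg.2 hb.2) (by split_ifs <;> norm_num)
  · exact div_pos hb.1 (Nat.cast_pos.2 (x i).pos)

lemma stepUnifOn_zero (s : Finset (Fin H)) (x y : Fin H → Fin K) :
    stepUnifOn s 0 x y = if ∀ i ∈ s, x i = y i then 1 else 0 := by
  simp [stepUnifOn, Finset.prod_boole]

lemma stepUnif_eq_mul_stepUnifOn_erase (b : ℝ) {x y : Fin H → Fin K} {h : Fin H}
    (hne : x h ≠ y h) :
    stepUnif K H b x y = b / K * stepUnifOn (Finset.univ.erase h) b x y := by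
  rw [stepUnif, ← Finset.mul_prod_erase _ _ (Finset.mem_univ h), if_neg hne, mul_zero, zero_add,
    stepUnifOn]

end Kernel

section Marginal

variable {K H : ℕ}

lemma continuous_qUnif (p : (Fin H → Fin K) → ℝ) (x : Fin H → Fin K) :
    Continuous fun σ => qUnif K H p σ x := by
  simp only [qUnif_eq_sum_stepUnifOn]
  exact continuous_finsetSum _ fun y _ => (continuous_stepUnifOn _ x y).const_mul (p y)

lemma qUnif_pos {p : (Fin H → Fin K) → ℝ} (hp : ∀ v, 0 ≤ p v) (hsum : 0 < ∑ v, p v)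
    {σ : ℝ} (hσ : σ ∈ Set.Ioc 0 1) (x : Fin H → Fin K) : 0 < qUnif K H p σ x := by
  obtain ⟨v, hv, hpv⟩ := (Finset.sum_pos_iff_of_nonneg fun v _ => hp v).1 hsum
  rw [qUnif_eq_sum_stepUnifOn]
  exact Finset.sum_pos' (fun y _ => mul_nonneg (hp y) (stepUnifOn_pos hσ _ x y).le)
    ⟨v, hv, mul_pos hpv (stepUnifOn_pos hσ _ x v)⟩

end Marginal

section CumulativeNoise

variable (β : ℕ → ℕ → ℝ)

lemma one_sub_cumNoise_succ (T t : ℕ) :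
    1 - cumNoise β T (t + 1) = (1 - cumNoise β T t) * (1 - β T (t + 1)) := by
  simp only [cumNoise, sub_sub_cancel]
  exact Finset.prod_Icc_succ_top (Nat.le_add_left 1 t) _

lemma cumNoise_sub_one {T t : ℕ} (ht : t ≠ 0) (hβ : β T t ≠ 1) :
    cumNoise β T (t - 1) = 1 - (1 - cumNoise β T t) / (1 - β T t) := by
  obtain ⟨n, rfl⟩ := Nat.exists_eq_succ_of_ne_zero ht
  rw [Nat.succ_eq_add_one, Nat.add_sub_cancel, one_sub_cumNoise_succ,
    mul_div_cancel_right₀ _ (sub_ne_zero.2 hβ.symm), sub_sub_cancel]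

variable {β}

lemma tendsto_cumNoise_sub_one {ι : Type*} {l : Filter ι} {T t : ι → ℕ} {σ : ℝ}
    (ht : ∀ᶠ n in l, t n ≠ 0) (hσ : Tendsto (fun n => cumNoise β (T n) (t n)) l (nhds σ))
    (hβ : Tendsto (fun n => β (T n) (t n)) l (nhds 0)) :
    Tendsto (fun n => cumNoise β (T n) (t n - 1)) l (nhds σ) := by
  have hlim : Tendsto (fun n => 1 - (1 - cumNoise β (T n) (t n)) / (1 - β (T n) (t n))) l
      (nhds (1 - (1 - σ) / (1 - 0))) :=
    ((hσ.const_sub 1).div (hβ.const_sub 1) (by norm_num)).const_sub 1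
  rw [sub_zero, div_one, sub_sub_cancel] at hlim
  refine hlim.congr' ?_
  filter_upwards [ht, hβ.eventually_ne zero_ne_one] with n hn hβn
  exact (cumNoise_sub_one β hn hβn).symm

end CumulativeNoise

section Reverse

variable {K H : ℕ} (p : (Fin H → Fin K) → ℝ) (h : Fin H) (a : Fin K) (x : Fin H → Fin K)

lemma continuous_jumpWeight : Continuous fun c : ℝ × ℝ => jumpWeight p h a x c.1 c.2 :=
  continuous_finsetSum _ fun y _ =>
    ((continuous_qUnif p y).comp continuous_fst).mul
      ((continuous_stepUnifOn _ x y).comp continuous_snd)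

lemma jumpWeight_zero (σ : ℝ) :
    jumpWeight p h a x σ 0 = qUnif K H p σ (Function.update x h a) := by
  have hupdate (y : Fin H → Fin K) :
      (y h = a ∧ ∀ i ∈ Finset.univ.erase h, x i = y i) ↔ y = Function.update x h a := by
    simp [Function.eq_update_iff, eq_comm]
  simp only [jumpWeight, stepUnifOn_zero, mul_ite, mul_one, mul_zero, Finset.sum_filter, ← ite_and,
    hupdate, Finset.sum_ite_eq', Finset.mem_univ, if_true]

variable {h a x}

lemma revUnif_div_rate {β : ℕ → ℕ → ℝ} {T t : ℕ} (hβ : β T t ≠ 0) (ha : a ≠ x h) :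
    revUnif K H p β T t h a x / (β T t / K) =
      jumpWeight p h a x (cumNoise β T (t - 1)) (β T t) / qUnif K H p (cumNoise β T t) x := by
  have hrate : β T t / K ≠ 0 := div_ne_zero hβ (Nat.cast_ne_zero.2 a.pos.ne')
  have hnum : ∑ y : Fin H → Fin K with y h = a,
      qUnif K H p (cumNoise β T (t - 1)) y * stepUnif K H (β T t) x y =
        β T t / K * jumpWeight p h a x (cumNoise β T (t - 1)) (β T t) := by
    rw [jumpWeight, Finset.mul_sum]
    refine Finset.sum_congr rfl fun y hy => ?_
    have hne : x h ≠ y h := (Finset.mem_filter.1 hy).2.symm ▸ ha.symm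
    rw [stepUnif_eq_mul_stepUnifOn_erase _ hne, mul_left_comm]
  rw [revUnif, hnum, div_right_comm, mul_div_cancel_left₀ _ hrate]

theorem uniform_reverse_normalized_limit_general {β : ℕ → ℕ → ℝ} {ι : Type*} {l : Filter ι}
    {T t : ι → ℕ} {σ : ℝ} (ht : ∀ᶠ n in l, t n ≠ 0) (hβ : ∀ᶠ n in l, β (T n) (t n) ≠ 0)
    (hσ : Tendsto (fun n => cumNoise β (T n) (t n)) l (nhds σ))
    (hβ₀ : Tendsto (fun n => β (T n) (t n)) l (nhds 0))
    (hq : qUnif K H p σ x ≠ 0) (ha : a ≠ x h) :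
    Tendsto (fun n => revUnif K H p β (T n) (t n) h a x / (β (T n) (t n) / K)) l
      (nhds (qUnif K H p σ (Function.update x h a) / qUnif K H p σ x)) := by
  have hnum := ((continuous_jumpWeight p h a x).tendsto (σ, 0)).comp
    ((tendsto_cumNoise_sub_one ht hσ hβ₀).prodMk_nhds hβ₀)
  have hden := ((continuous_qUnif p x).tendsto σ).comp hσ
  rw [← jumpWeight_zero]
  refine (hnum.div hden hq).congr' ?_
  filter_upwards [hβ] with n hn
  exact (revUnif_div_rate p hn ha).symm

end Reverse

/-- Continuous-time limit of the normalized single-token uniform reverse probability: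
under the noise-schedule assumption at `σ`, with `t = t_σ(T)`,
`q^h_{t−1|t}(a|x)/(β^{(T)}_t/K) → q_σ(x^{h→a})/q_σ(x)` as `T → ∞`. -/
theorem uniform_reverse_normalized_limit
    (K H : ℕ) (hK : 2 ≤ K) (hH : 1 ≤ H)
    (p : (Fin H → Fin K) → ℝ) (hp0 : ∀ v, 0 ≤ p v) (hp1 : ∑ v, p v = 1)
    (β : ℕ → ℕ → ℝ) (hβ : ∀ T, ∀ t ∈ Finset.Icc 1 T, β T t ∈ Set.Ioo (0 : ℝ) 1)
    (σ : ℝ) (hσ : σ ∈ Set.Ioo (0 : ℝ) 1)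
    (tsel : ℕ → ℕ)
    (htsel : ∀ T, 1 ≤ T → tsel T ∈ Finset.Icc 1 T ∧
      ∀ s ∈ Finset.Icc 1 T, |cumNoise β T (tsel T) - σ| ≤ |cumNoise β T s - σ|)
    (hsched1 : Tendsto (fun T => cumNoise β T (tsel T)) atTop (nhds σ))
    (hsched2 : Tendsto (fun T => β T (tsel T)) atTop (nhds 0))
    (x : Fin H → Fin K) (h : Fin H) (a : Fin K) (ha : a ≠ x h) :
    Tendsto (fun T => revUnif K H p β T (tsel T) h a x / (β T (tsel T) / K)) atTop
      (nhds (qUnif K H p σ (Function.update x h a) / qUnif K H p σ x)) := by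
  have hmem : ∀ᶠ T in atTop, tsel T ∈ Finset.Icc 1 T :=
    (eventually_ge_atTop 1).mono fun T hT => (htsel T hT).1
  exact uniform_reverse_normalized_limit_general p
    (hmem.mono fun T hT => Nat.one_le_iff_ne_zero.1 (Finset.mem_Icc.1 hT).1)
    (hmem.mono fun T hT => (hβ T _ hT).1.ne') hsched1 hsched2
    (qUnif_pos hp0 (hp1 ▸ zero_lt_one) (Set.Ioo_subset_Ioc_self hσ) x).ne' ha
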